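/- Let I ⊆ [n-1] with gcd(I ∪ {n}) = 1. Then the number of permutations of [n] with descent set contained in I equals n times the number of n-cycles with descent set contained in I. -/

import Mathlib

/-!
Let `I` cut `[n]` into consecutive blocks and let `b i` be the index of the block of `i`. Then
`D(π) ⊆ I` exactly when `π` increases on each block. Both sides of the identity count the words
`W = b ∘ σ`, with `σ` a permutation, i.e. the rearrangements of the word `b`.

* A permutation `π` increasing on blocks corresponds to the word `b ∘ π⁻¹`; it is recovered from the
  word as its stable sort (`image_inv_eq_range`, `injOn_inv`).
* Fix an `n`-cycle `c` and a base point `z`. Pairs of an `n`-cycle `π` and a point `x` correspond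
  to permutations `r` through `π = r c r⁻¹`, `x = r z` (`card_conj`). If `π` increases on blocks,
  the word `b ∘ r`, read along `c` from `z`, lists the blocks visited by the trajectory of `x`,
  and `r` orders the rotations of that word lexicographically. The condition on the gcd implies that no rearrangement of
  `b` has a nontrivial rotational symmetry (`itin_injective`), so the rotations are
  distinct, `r` is determined by the word, and every word arises
  (`image_conj_eq_range`, `injOn_conj`). This is the Gessel–Reutenauer bijection in the
  case of a single primitive necklace.
-/

open Finset

/-- The value `π(i)` of a permutation of `[n]`, in 1-based position notation. -/
def permVal {n : ℕ} (π : Equiv.Perm (Fin n)) (i : ℕ) : ℕ :=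
  if h : i - 1 < n then ((π ⟨i - 1, h⟩ : Fin n) : ℕ) else 0

/-- The descent set `D(π) = {i ∈ [n-1] : π(i) > π(i+1)}` (1-based). -/
def descSet {n : ℕ} (π : Equiv.Perm (Fin n)) : Finset ℕ :=
  (Finset.Ioo 0 n).filter fun i => permVal π (i + 1) < permVal π i

/-- `π` is an `n`-cycle: a permutation of `[n]` consisting of a single cycle of length `n`. -/
def IsFullCycle {n : ℕ} (π : Equiv.Perm (Fin n)) : Prop :=
  ∀ x y : Fin n, ∃ k : ℕ, (π ^ k) x = y

/-- `α_n(I)`: number of permutations of `[n]` with descent set contained in `I`. -/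
noncomputable def alphaP (n : ℕ) (I : Finset ℕ) : ℕ :=
  Nat.card {π : Equiv.Perm (Fin n) // descSet π ⊆ I}

/-- `α^cyc_n(I)`: number of `n`-cycles with descent set contained in `I`. -/
noncomputable def alphaC (n : ℕ) (I : Finset ℕ) : ℕ :=
  Nat.card {π : Equiv.Perm (Fin n) // IsFullCycle π ∧ descSet π ⊆ I}

/-- `β_n(I)`: number of permutations of `[n]` with descent set exactly `I`. -/
noncomputable def betaP (n : ℕ) (I : Finset ℕ) : ℕ :=
  Nat.card {π : Equiv.Perm (Fin n) // descSet π = I}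

/-- `β^cyc_n(I)`: number of `n`-cycles with descent set exactly `I`. -/
noncomputable def betaC (n : ℕ) (I : Finset ℕ) : ℕ :=
  Nat.card {π : Equiv.Perm (Fin n) // IsFullCycle π ∧ descSet π = I}

/-- `I/d = {i/d : i ∈ I, d ∣ i}`. -/
def divSet (I : Finset ℕ) (d : ℕ) : Finset ℕ :=
  (I.filter fun i => d ∣ i).image (· / d)

namespace CyclicDescents

open Equiv

/-- `π` is increasing on each fibre (block) of `b`. -/
def IncOn {n : ℕ} (b : Fin n → ℕ) (π : Perm (Fin n)) : Prop :=
  ∀ i j, i < j → b i = b j → π i < π j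

/-- The itinerary of `j`: the word `W` read along the `c`-trajectory of `j`, as an element of the
lexicographically ordered type of sequences. When `c` is a full cycle these are the rotations of
the cyclic word `W`. -/
def itin {n : ℕ} (c : Perm (Fin n)) (W : Fin n → ℕ) (j : Fin n) : Lex (ℕ → ℕ) :=
  toLex fun t => W ((c ^ t) j)

/-- The index of the block of `i`, for the blocks into which the elements of `I` cut `Fin n`. With
0-based indices, `j ∈ I` separates `j - 1` from `j`. -/
def blk {n : ℕ} (I : Finset ℕ) (i : Fin n) : ℕ := (I.filter fun j => j ≤ (i : ℕ)).card

/-! ### Blocks and descents -/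

lemma blk_mono {n : ℕ} (I : Finset ℕ) : Monotone (blk I : Fin n → ℕ) := by
  intro i j hij
  refine card_le_card fun k hk => ?_
  simp only [mem_filter] at hk ⊢
  exact ⟨hk.1, hk.2.trans hij⟩

lemma blk_lt_iff {n : ℕ} {I : Finset ℕ} {i m : Fin n} (hm : (m : ℕ) ∈ I) :
    blk I i < blk I m ↔ i < m := by
  refine ⟨fun h => lt_of_not_ge fun h' => absurd (blk_mono I h') (not_le.2 h), fun h => ?_⟩
  refine card_lt_card (Finset.ssubset_iff_of_subset ?_ |>.2 ⟨m, ?_, ?_⟩)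
  · intro k hk
    simp only [mem_filter] at hk ⊢
    exact ⟨hk.1, hk.2.trans h.le⟩
  · simp [hm]
  · simp only [mem_filter, not_and, not_le]
    exact fun _ => h

lemma descSet_subset_iff {n : ℕ} (I : Finset ℕ) (π : Perm (Fin n)) :
    descSet π ⊆ I ↔ IncOn (blk I) π := by
  constructor
  · intro h i j hij hb
    have step : ∀ m (hm : m + 1 < n), (i : ℕ) ≤ m → m + 1 ≤ j →
        π ⟨m, by omega⟩ < π ⟨m + 1, hm⟩ := by
      intro m hm him hmj
      have hmI : m + 1 ∉ I := fun hmI => by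
        have h1 := (blk_lt_iff (i := i) (m := ⟨m + 1, hm⟩) hmI).2
          (by simp only [Fin.lt_def]; omega)
        have h2 := blk_mono I (show (⟨m + 1, hm⟩ : Fin n) ≤ j from hmj)
        omega
      by_contra hlt
      have hne : π ⟨m + 1, hm⟩ ≠ π ⟨m, by omega⟩ := fun he => by
        have := congrArg Fin.val (π.injective he)
        simp at this
      refine hmI (h ?_)
      simp only [descSet, permVal, mem_filter, mem_Ioo, Nat.add_sub_cancel]
      rw [dif_pos hm, dif_pos (by omega)]
      exact ⟨⟨by omega, hm⟩, lt_of_le_of_ne (not_lt.1 hlt) (Fin.val_ne_of_ne hne)⟩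
    have key : ∀ d : ℕ, ∀ hd : (i : ℕ) + d + 1 < n, (i : ℕ) + d + 1 ≤ j →
        π i < π ⟨i + d + 1, hd⟩ := by
      intro d
      induction d with
      | zero => exact fun hd hj => step i hd le_rfl hj
      | succ d ih =>
        exact fun hd hj => (ih (by omega) (by omega)).trans (step (i + d + 1) hd (by omega) hj)
    have hij' : (i : ℕ) < j := hij
    have e : (i : ℕ) + (j - i - 1) + 1 = j := by omega
    have := key (j - i - 1) (by omega) (by omega)
    simpa only [e] using this
  · intro h m hm
    simp only [descSet, permVal, mem_filter, mem_Ioo, Nat.add_sub_cancel] at hm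
    obtain ⟨⟨h0, hn⟩, hlt⟩ := hm
    rw [dif_pos hn, dif_pos (by omega)] at hlt
    by_contra hI
    refine absurd (h ⟨m - 1, by omega⟩ ⟨m, hn⟩ (by simp only [Fin.lt_def]; omega) ?_)
      (not_lt.2 (le_of_lt hlt))
    unfold blk
    congr 1
    ext k
    simp only [mem_filter, and_congr_right_iff]
    intro hk
    have : k ≠ m := fun e => hI (e ▸ hk)
    omega

/-- The gcd hypothesis in terms of block sizes: each element of `I ∪ {n}` is a sum of block
sizes. -/
lemma not_dvd_blocks {n : ℕ} {I : Finset ℕ} (hI : I ⊆ Finset.Ioo 0 n)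
    (hgcd : (insert n I).gcd id = 1) {p : ℕ} (hp : p.Prime)
    (h : ∀ v, p ∣ (univ.filter fun i : Fin n => blk I i = v).card) : False := by
  have hdvd : p ∣ (insert n I).gcd id := by
    refine Finset.dvd_gcd fun m hm => ?_
    rcases Finset.mem_insert.1 hm with rfl | hm
    · have := Finset.card_eq_sum_card_image (blk I) (univ : Finset (Fin m))
      rw [Finset.card_univ, Fintype.card_fin] at this
      rw [id, this]
      exact Finset.dvd_sum fun v _ => h v
    · have hmn : m < n := (mem_Ioo.1 (hI hm)).2
      have := Finset.card_eq_sum_card_fiberwise (f := blk I) (s := Finset.Iio (⟨m, hmn⟩ : Fin n))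
        (t := Finset.range (blk I (⟨m, hmn⟩ : Fin n))) (fun i hi => by
          simpa [blk_lt_iff (m := ⟨m, hmn⟩) hm] using hi)
      rw [Fin.card_Iio] at this
      change p ∣ m
      simp only at this
      rw [this]
      refine Finset.dvd_sum fun v hv => ?_
      refine (h v).trans (dvd_of_eq (congrArg Finset.card ?_))
      ext i
      simp only [mem_filter, mem_Iio, mem_univ, true_and, iff_and_self]
      intro hi
      rw [← blk_lt_iff hm, hi]
      exact Finset.mem_range.1 hv
  rw [hgcd] at hdvd
  exact hp.one_lt.ne' (Nat.dvd_one.1 hdvd)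

/-! ### Full cycles -/

lemma isFullCycle_iff {n : ℕ} (π : Perm (Fin n)) :
    IsFullCycle π ↔ π.IsCycleOn ((univ : Finset (Fin n)) : Set (Fin n)) := by
  constructor
  · intro h
    refine ⟨by simp [Set.bijOn_univ], fun x _ y _ => ?_⟩
    obtain ⟨k, hk⟩ := h x y
    exact ⟨k, by simpa using hk⟩
  · intro h x y
    obtain ⟨k, -, hk⟩ := h.exists_pow_eq (mem_univ x) (mem_univ y)
    exact ⟨k, hk⟩

lemma IsFullCycle.pow_eq_iff {n : ℕ} {π : Perm (Fin n)} (h : IsFullCycle π) (x : Fin n) {k l : ℕ} :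
    (π ^ k) x = (π ^ l) x ↔ k ≡ l [MOD n] := by
  simpa using ((isFullCycle_iff π).1 h).pow_apply_eq_pow_apply (mem_univ x) (m := k) (n := l)

lemma exists_fullCycle (n : ℕ) : ∃ c : Perm (Fin n), IsFullCycle c := by
  obtain ⟨c, hc, -⟩ := Finset.exists_cycleOn (univ : Finset (Fin n))
  exact ⟨c, (isFullCycle_iff c).2 hc⟩

/-! ### Distinctness of rotations -/

/-- If the block sizes have no common prime factor, then the rotations of a rearrangement of `b`
are distinct. Otherwise some power of `c` of prime order `p` preserves the word; it acts
without fixed points on the positions of each letter, so `p` divides all block sizes. -/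
lemma itin_injective {n : ℕ} {c : Perm (Fin n)} (hc : IsFullCycle c) {b : Fin n → ℕ}
    (hb : ∀ p : ℕ, p.Prime → ¬ ∀ v, p ∣ (univ.filter fun i : Fin n => b i = v).card)
    (σ : Perm (Fin n)) : Function.Injective (itin c (b ∘ σ)) := by
  intro j j' hjj
  by_contra hne
  obtain ⟨s, rfl⟩ := hc j j'
  have hW : ∀ y, b (σ ((c ^ s) y)) = b (σ y) := by
    intro y
    obtain ⟨t, rfl⟩ := hc j y
    have := congrFun (congrArg ofLex hjj) t
    simp only [itin, ofLex_toLex, Function.comp] at this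
    rw [this, ← Perm.mul_apply (c ^ s), ← Perm.mul_apply (c ^ t), ← pow_add, ← pow_add, add_comm]
  have hg : c ^ s ≠ 1 := fun h => hne (by rw [h]; rfl)
  obtain ⟨p, hp, hpd⟩ := Nat.exists_prime_and_dvd (n := orderOf (c ^ s))
    (fun h => hg (orderOf_eq_one_iff.1 h))
  set q := orderOf (c ^ s) / p with hq
  have ho : orderOf ((c ^ s) ^ q) = p := orderOf_pow_orderOf_div (orderOf_pos _).ne' hpd
  set g := (c ^ s) ^ q with hgdef
  have hWg : ∀ y, b (σ (g y)) = b (σ y) := by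
    have : ∀ k y, b (σ (((c ^ s) ^ k) y)) = b (σ y) := by
      intro k
      induction k with
      | zero => simp
      | succ k ih => intro y; rw [pow_succ, Perm.mul_apply, ih, hW]
    exact this q
  have hfree : ∀ y, g y ≠ y := by
    intro y hy
    have hgk : g = c ^ (s * q) := by rw [hgdef, pow_mul]
    have h1 : s * q ≡ 0 [MOD n] := (IsFullCycle.pow_eq_iff hc y).1 (by simpa [hgk] using hy)
    have h2 : g = 1 := by
      ext z : 1
      rw [hgk, (IsFullCycle.pow_eq_iff hc z).2 h1, pow_zero]
    rw [h2, orderOf_one] at ho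
    exact hp.one_lt.ne ho
  refine hb p hp fun v => ?_
  have : Fact p.Prime := ⟨hp⟩
  let F := {y : Fin n // b (σ y) = v}
  let f : Perm F := g.subtypePerm (fun y => by rw [hWg])
  have hfp : (f : Perm F) ^ p ^ 1 = 1 := by
    rw [pow_one, Perm.subtypePerm_pow]
    ext y
    have : g ^ p = 1 := ho ▸ pow_orderOf_eq_one g
    simp [this]
  have hsupp : p ∣ Fintype.card F := by
    have := Equiv.Perm.card_compl_support_modEq hfp
    have he : f.supportᶜ = ∅ := by
      rw [Finset.compl_eq_empty_iff, Finset.eq_univ_iff_forall]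
      intro y
      rw [Perm.mem_support]
      exact fun h => hfree y.1 (congrArg Subtype.val h)
    rw [he, card_empty] at this
    exact (Nat.modEq_zero_iff_dvd.1 this.symm)
  have hcard : Fintype.card F = (univ.filter fun i : Fin n => b i = v).card := by
    rw [← Fintype.card_subtype]
    exact Fintype.card_congr (σ.subtypeEquiv fun _ => Iff.rfl)
  rwa [hcard] at hsupp

/-! ### Permutations increasing on blocks and words -/

/-- Every rearrangement `W` of `b` is `b ∘ π⁻¹`, where `π` is the stable sort of `W`. -/
lemma image_inv_eq_range {n : ℕ} {b : Fin n → ℕ} (hb : Monotone b) :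
    (fun π : Perm (Fin n) => b ∘ (π⁻¹ : Perm (Fin n))) '' {π | IncOn b π} =
      Set.range fun σ : Perm (Fin n) => b ∘ σ := by
  ext W
  constructor
  · rintro ⟨π, -, rfl⟩
    exact ⟨π⁻¹, rfl⟩
  · rintro ⟨σ, rfl⟩
    obtain ⟨hm, hs⟩ := (Tuple.eq_sort_iff (f := b ∘ σ)).1 rfl
    set s := Tuple.sort (b ∘ σ)
    have hσ : (b ∘ σ) ∘ (σ⁻¹ : Perm (Fin n)) = b := by ext; simp
    have he : (b ∘ σ) ∘ s = b :=
      (Tuple.unique_monotone hm (τ := σ⁻¹) (by rw [hσ]; exact hb)).trans hσ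
    refine ⟨s, fun i j hij hbij => hs i j hij ?_, ?_⟩
    · rw [← he] at hbij
      exact hbij
    · ext k
      simpa using (congrFun he (s⁻¹ k)).symm

lemma injOn_inv {n : ℕ} {b : Fin n → ℕ} (hb : Monotone b) :
    Set.InjOn (fun π : Perm (Fin n) => b ∘ (π⁻¹ : Perm (Fin n))) {π | IncOn b π} := by
  have key : ∀ π, IncOn b π → π = Tuple.sort (b ∘ (π⁻¹ : Perm (Fin n))) := by
    intro π h
    have hσ : (b ∘ (π⁻¹ : Perm (Fin n))) ∘ π = b := by ext; simp
    refine Tuple.eq_sort_iff.2 ⟨by rw [hσ]; exact hb, fun i j hij hbij => h i j hij ?_⟩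
    simpa using hbij
  intro π h π' h' he
  rw [key π h, key π' h']
  exact congrArg Tuple.sort he

/-! ### Conjugates of the fixed cycle and words -/

lemma itin_lt_step {n : ℕ} (c : Perm (Fin n)) (W : Fin n → ℕ) {j j' : Fin n}
    (h : itin c W j < itin c W j') : W j < W j' ∨ W j = W j' ∧ itin c W (c j) < itin c W (c j') := by
  obtain ⟨t, ht, hlt⟩ := h
  cases t with
  | zero => exact Or.inl hlt
  | succ t =>
    refine Or.inr ⟨ht 0 (Nat.succ_pos t), t, fun u hu => ?_, ?_⟩
    · have := ht (u + 1) (Nat.succ_lt_succ hu)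
      simpa [itin, pow_succ] using this
    · simpa [itin, pow_succ] using hlt

/-- Every rearrangement `W` of `b` is `b ∘ r`, where `r` ranks the positions by the lexicographic
order of the rotations of `W`. -/
lemma image_conj_eq_range {n : ℕ} {c : Perm (Fin n)} {b : Fin n → ℕ} (hb : Monotone b)
    (hinj : ∀ σ : Perm (Fin n), Function.Injective (itin c (b ∘ σ))) :
    (fun r : Perm (Fin n) => b ∘ r) '' {r | IncOn b (r * c * r⁻¹)} =
      Set.range fun σ : Perm (Fin n) => b ∘ σ := by
  ext W
  constructor
  · rintro ⟨π, -, rfl⟩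
    exact ⟨π, rfl⟩
  · rintro ⟨σ, rfl⟩
    have hm := Tuple.monotone_sort (itin c (b ∘ σ))
    set s := Tuple.sort (itin c (b ∘ σ))
    have hsm : StrictMono (itin c (b ∘ σ) ∘ s) :=
      hm.strictMono_of_injective ((hinj σ).comp s.injective)
    have hσ : (b ∘ σ) ∘ (σ⁻¹ : Perm (Fin n)) = b := by ext; simp
    have hWs : Monotone ((b ∘ σ) ∘ s) := by
      intro i j hij
      rcases hij.eq_or_lt with rfl | hij
      · exact le_rfl
      · rcases itin_lt_step c _ (hsm hij) with h | h
        · exact h.le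
        · exact h.1.le
    have he : (b ∘ σ) ∘ s = b :=
      (Tuple.unique_monotone hWs (τ := σ⁻¹) (by rw [hσ]; exact hb)).trans hσ
    refine ⟨s⁻¹, fun i j hij hbij => ?_, ?_⟩
    · rcases itin_lt_step c _ (hsm hij) with h | h
      · rw [← he] at hbij
        exact absurd hbij h.ne
      · refine hsm.lt_iff_lt.1 ?_
        have e : ∀ k, s ((s⁻¹ * c * s⁻¹⁻¹) k) = c (s k) := fun k => by simp
        simp only [Function.comp_apply, e]
        exact h.2
    · ext k
      simpa using (congrFun he (s⁻¹ k)).symm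

/-- If `r * c * r⁻¹` increases on the blocks, then `r` orders positions compatibly with their
itineraries: as long as two trajectories visit the same blocks, their order is preserved. -/
lemma monotone_itin {n : ℕ} {c : Perm (Fin n)} {b : Fin n → ℕ} (hb : Monotone b)
    {r : Perm (Fin n)} (hr : IncOn b (r * c * r⁻¹)) :
    Monotone (itin c (b ∘ r) ∘ (r⁻¹ : Perm (Fin n))) := by
  intro i j hij
  by_contra hlt
  obtain ⟨t, ht, hlt⟩ := not_le.1 hlt
  have hit : ∀ i u, r ((c ^ u) (r⁻¹ i)) = ((r * c * r⁻¹) ^ u) i := by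
    intro i u
    rw [conj_pow]
    rfl
  simp only [itin, Function.comp, hit] at ht hlt
  change b _ < b _ at hlt
  have key : ∀ u ≤ t, ((r * c * r⁻¹) ^ u) i ≤ ((r * c * r⁻¹) ^ u) j := by
    intro u
    induction u with
    | zero => intro _; simpa using hij
    | succ u ih =>
      intro hu
      rw [pow_succ', Perm.mul_apply _ (_ ^ u), Perm.mul_apply _ (_ ^ u)]
      rcases (ih (by omega)).eq_or_lt with h | h
      · rw [h]
      · exact (hr _ _ h (ht u (by omega)).symm).le
  exact absurd (hb (key t le_rfl)) (not_le.2 hlt)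

lemma injOn_conj {n : ℕ} {c : Perm (Fin n)} {b : Fin n → ℕ} (hb : Monotone b)
    (hinj : ∀ σ : Perm (Fin n), Function.Injective (itin c (b ∘ σ))) :
    Set.InjOn (fun r : Perm (Fin n) => b ∘ r) {r | IncOn b (r * c * r⁻¹)} := by
  intro r hr r' hr' he
  have h1 := monotone_itin hb hr
  have h2 := monotone_itin hb hr'
  simp only at he
  rw [← he] at h2
  have h3 := Tuple.unique_monotone h1 h2
  have h4 : r⁻¹ = r'⁻¹ := by
    ext i : 1
    exact hinj r (congrFun h3 i)
  exact inv_injective h4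

/-! ### Counting conjugators -/

/-- A full cycle together with a point is the same as a permutation `r` carrying the fixed full
cycle `c` and the base point `z` to them. -/
lemma card_conj {n : ℕ} (hn : 0 < n) {c : Perm (Fin n)} (hc : IsFullCycle c)
    (Q : Perm (Fin n) → Prop) :
    Nat.card {r : Perm (Fin n) // Q (r * c * r⁻¹)} =
      n * Nat.card {π : Perm (Fin n) // IsFullCycle π ∧ Q π} := by
  let z : Fin n := ⟨0, hn⟩
  have hfull : ∀ r : Perm (Fin n), IsFullCycle (r * c * r⁻¹) := by
    intro r x y
    obtain ⟨k, hk⟩ := hc (r⁻¹ x) (r⁻¹ y)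
    refine ⟨k, ?_⟩
    rw [conj_pow, Perm.mul_apply, Perm.mul_apply, hk]
    simp
  let f : {r : Perm (Fin n) // Q (r * c * r⁻¹)} →
      Fin n × {π : Perm (Fin n) // IsFullCycle π ∧ Q π} :=
    fun r => (r.1 z, ⟨r.1 * c * r.1⁻¹, hfull r.1, r.2⟩)
  have hf : Function.Bijective f := by
    constructor
    · rintro ⟨r, hr⟩ ⟨r', hr'⟩ h
      simp only [f, Prod.mk.injEq, Subtype.mk.injEq] at h
      obtain ⟨hz, hπ⟩ := h
      congr 1
      ext y : 1
      obtain ⟨k, rfl⟩ := hc z y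
      have e : ∀ r : Perm (Fin n), r ((c ^ k) z) = ((r * c * r⁻¹) ^ k) (r z) := by
        intro r
        rw [conj_pow]
        simp
      rw [e r, e r', hπ, hz]
    · rintro ⟨x, π, hπ, hQ⟩
      choose k hk using hc z
      have hinj : Function.Injective fun y => (π ^ k y) x := by
        intro y y' h
        have h' := (IsFullCycle.pow_eq_iff hπ x).1 h
        rw [← hk y, ← hk y']
        exact (IsFullCycle.pow_eq_iff hc z).2 h'
      let r : Perm (Fin n) := Equiv.ofBijective _ (Finite.injective_iff_bijective.1 hinj)
      have hr : ∀ t, r ((c ^ t) z) = (π ^ t) x := fun t =>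
        (IsFullCycle.pow_eq_iff hπ x).2 ((IsFullCycle.pow_eq_iff hc z).1 (hk _))
      have hconj : r * c * r⁻¹ = π := by
        rw [mul_inv_eq_iff_eq_mul]
        ext y : 1
        obtain ⟨t, rfl⟩ := hc z y
        rw [Perm.mul_apply, Perm.mul_apply, hr, ← Perm.mul_apply c, ← pow_succ', hr, pow_succ',
          Perm.mul_apply]
      refine ⟨⟨r, by rwa [hconj]⟩, ?_⟩
      simp only [f, Prod.mk.injEq, Subtype.mk.injEq]
      exact ⟨by simpa using hr 0, hconj⟩
  rw [Nat.card_congr (Equiv.ofBijective f hf), Nat.card_prod, Nat.card_fin]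

end CyclicDescents

open CyclicDescents in
/-- If `I ⊆ [n-1]` and `gcd(I ∪ {n}) = 1`, then the number of permutations of `[n]`
with descent set contained in `I` equals `n` times the number of `n`-cycles with
descent set contained in `I`. -/
theorem alphaP_eq_n_mul_alphaC (n : ℕ) (hn : 0 < n) (I : Finset ℕ)
    (hI : I ⊆ Finset.Ioo 0 n) (hgcd : (insert n I).gcd id = 1) :
    alphaP n I = n * alphaC n I := by
  obtain ⟨c, hc⟩ := exists_fullCycle n
  have hb : Monotone (blk I : Fin n → ℕ) := blk_mono I
  have hinj := itin_injective hc (b := blk I) fun p hp h => not_dvd_blocks hI hgcd hp h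
  simp only [alphaP, alphaC, descSet_subset_iff]
  rw [← card_conj hn hc (IncOn (blk I))]
  change Set.ncard {π : Equiv.Perm (Fin n) | IncOn (blk I) π} =
    Set.ncard {r : Equiv.Perm (Fin n) | IncOn (blk I) (r * c * r⁻¹)}
  rw [← (injOn_inv hb).ncard_image, ← (injOn_conj hb hinj).ncard_image,
    image_inv_eq_range hb, image_conj_eq_range hb hinj]
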